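/- Let T > 0, let σ : ℝ → ℝ be Lipschitz continuous with σ(x) > 0 for all x, let b and b̃ belong to the class M, and let f : ℝ → ℝ be of class C² with f'(x) ≠ 0 for all x ∈ ℝ. Let u be a classical solution of the parabolic equation associated with (b, σ, f) and let ũ be a classical solution of the parabolic equation associated with (b̃, σ, f). If there exist ε ∈ (0, T) and a point x₀ ∈ ℝ such that u(t,x₀) = ũ(t,x₀) and ∂_x u(t,x₀) = ∂_x ũ(t,x₀) for all t ∈ (0, ε), then b(x) = b̃(x) for all x ∈ ℝ. -/

import Mathlib

open Set Filter

/-- A function `ψ : ℝ → ℝ` is piecewise analytic if there exist `δ > 0`, a strictly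
increasing sequence `(κ j)_{j ∈ ℤ}` tending to `-∞` at `-∞` and `+∞` at `+∞` with
`κ (j+1) - κ j > δ`, and functions `φ j` analytic on `[κ j, κ (j+1)]`, such that
`ψ = φ j` on `[κ j, κ (j+1))`. -/
def PiecewiseAnalytic (ψ : ℝ → ℝ) : Prop :=
  ∃ (δ : ℝ) (κ : ℤ → ℝ) (φ : ℤ → ℝ → ℝ),
    0 < δ ∧ StrictMono κ ∧
    Tendsto κ atBot atBot ∧ Tendsto κ atTop atTop ∧
    (∀ j : ℤ, δ < κ (j + 1) - κ j) ∧
    (∀ j : ℤ, AnalyticOn ℝ (φ j) (Icc (κ j) (κ (j + 1)))) ∧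
    (∀ j : ℤ, ∀ x ∈ Ico (κ j) (κ (j + 1)), ψ x = φ j x)

/-- The class `M` of Lipschitz-continuous, piecewise analytic functions on `ℝ`. -/
def ClassM (ψ : ℝ → ℝ) : Prop :=
  (∃ K, LipschitzWith K ψ) ∧ PiecewiseAnalytic ψ

/-- `u : [0,T) × ℝ → ℝ` is a classical solution of
`∂ₜ u = (1/2) σ(x)² ∂ₓₓ u + b(x) ∂ₓ u`, `u(0, ·) = f`:
`u`, `∂ₜ u`, `∂ₓ u`, `∂ₓₓ u` exist and are continuous on `[0,T) × ℝ`, the PDE holds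
there, and the initial condition holds. -/
def IsClassicalSolution (T : ℝ) (b σ f : ℝ → ℝ) (u : ℝ → ℝ → ℝ) : Prop :=
  ContinuousOn (fun p : ℝ × ℝ => u p.1 p.2) (Ico 0 T ×ˢ univ) ∧
  (∀ t ∈ Ico 0 T, ∀ x : ℝ, DifferentiableAt ℝ (fun s => u s x) t) ∧
  (∀ t ∈ Ico 0 T, ∀ x : ℝ, DifferentiableAt ℝ (fun y => u t y) x) ∧
  (∀ t ∈ Ico 0 T, ∀ x : ℝ, DifferentiableAt ℝ (deriv (fun y => u t y)) x) ∧
  ContinuousOn (fun p : ℝ × ℝ => deriv (fun s => u s p.2) p.1) (Ico 0 T ×ˢ univ) ∧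
  ContinuousOn (fun p : ℝ × ℝ => deriv (fun y => u p.1 y) p.2) (Ico 0 T ×ˢ univ) ∧
  ContinuousOn (fun p : ℝ × ℝ => deriv (deriv (fun y => u p.1 y)) p.2) (Ico 0 T ×ˢ univ) ∧
  (∀ t ∈ Ico 0 T, ∀ x : ℝ,
    deriv (fun s => u s x) t =
      (1 / 2) * (σ x) ^ 2 * deriv (deriv (fun y => u t y)) x
        + b x * deriv (fun y => u t y) x) ∧
  (∀ x : ℝ, u 0 x = f x)

/-! Subtract the two equations: `w = u - ũ` satisfies `∂ₜw - ½σ²∂ₓₓw - b∂ₓw = (b - b̃)∂ₓũ` and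
vanishes at time `0` and at `x₀`. Since `b - b̃` is one-sidedly analytic it cannot oscillate, so if
`b ≠ b̃` somewhere to the right of `x₀`, then `b - b̃` keeps a weak sign on some `[x₀, x₁]` and does
not vanish at `x₁`. For small times `∂ₓũ` keeps the sign of `f'`, so a constant multiple of `w` is a
supersolution which grows at least linearly in time at `x₁`. Hopf's boundary lemma then forces
`∂ₓw(τ, x₀) ≠ 0`, contradicting the observation. The left half-line follows by reflecting space. -/

open scoped Topology

section RealFunctions

lemma mul_deriv_nonneg_of_isMinOn_segment {g : ℝ → ℝ} {a b : ℝ} (hg : DifferentiableAt ℝ g a)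
    (hmin : IsMinOn g (segment ℝ a b) a) : 0 ≤ (b - a) * deriv g a := by
  simpa using hmin.localize.hasFDerivWithinAt_nonneg hg.hasDerivAt.hasFDerivAt.hasFDerivWithinAt
    (sub_mem_posTangentConeAt_of_segment_subset subset_rfl)

lemma deriv_deriv_nonneg_of_isLocalMin {g : ℝ → ℝ} {x : ℝ} (hg : ContinuousAt g x)
    (hmin : IsLocalMin g x) : 0 ≤ deriv (deriv g) x := by
  by_contra! hneg
  have hmax : IsLocalMax g x := isLocalMax_of_deriv_deriv_neg hneg hmin.deriv_eq_zero hg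
  have hconst : g =ᶠ[𝓝 x] fun _ => g x := by
    filter_upwards [hmin, hmax] with y h₁ h₂ using le_antisymm h₂ h₁
  simp [hconst.deriv.deriv_eq] at hneg

lemma exp_sub_one_le_mul_exp {s A : ℝ} (hs : 0 ≤ s) (hsA : s ≤ A) :
    Real.exp s - 1 ≤ s * Real.exp A := by
  have hinv : Real.exp s * Real.exp (-s) = 1 := by rw [← Real.exp_add]; simp
  have htangent : Real.exp s * (1 - s) ≤ Real.exp s * Real.exp (-s) :=
    mul_le_mul_of_nonneg_left (by linarith [Real.add_one_le_exp (-s)]) (Real.exp_pos s).le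
  have hmono : s * Real.exp s ≤ s * Real.exp A :=
    mul_le_mul_of_nonneg_left (Real.exp_le_exp.2 hsA) hs
  linarith

lemma eventually_add_mul_sub_le_of_hasDerivWithinAt_Ioi {g : ℝ → ℝ} {g' a c : ℝ}
    (hg : HasDerivWithinAt g g' (Ioi a) a) (hc : c < g') :
    ∀ᶠ t in 𝓝[>] a, g a + c * (t - a) ≤ g t := by
  have hslope := (hasDerivWithinAt_iff_tendsto_slope' self_notMem_Ioi).1 hg
  filter_upwards [hslope.eventually_const_lt hc, self_mem_nhdsWithin] with t ht hat
  rw [slope_def_field, lt_div_iff₀ (sub_pos.2 hat)] at ht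
  linarith

lemma eventually_forall_Ioc_of_eventually_nhdsGT {X : Type*} [LinearOrder X] [TopologicalSpace X]
    [OrderTopology X] [DenselyOrdered X] [NoMaxOrder X] {p : X → Prop} {a : X}
    (h : ∀ᶠ t in 𝓝[>] a, p t) : ∀ᶠ s in 𝓝[>] a, ∀ t ∈ Ioc a s, p t := by
  obtain ⟨c, hac, hc⟩ := mem_nhdsGT_iff_exists_Ioc_subset.1 h
  filter_upwards [Ioc_mem_nhdsGT hac] with s hs t ht using hc ⟨ht.1, ht.2.trans hs.2⟩

lemma mul_pos_of_continuousOn_of_ne_zero {X : Type*} [TopologicalSpace X] {s : Set X} {d : X → ℝ}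
    (hs : IsPreconnected s) (hd : ContinuousOn d s) (hne : ∀ x ∈ s, d x ≠ 0) {x y : X}
    (hx : x ∈ s) (hy : y ∈ s) : 0 < d x * d y := by
  by_contra! hneg
  obtain ⟨z, hz, hz₀⟩ := hs.intermediate_value hx hy (hd.mul continuousOn_const)
    (⟨hneg, mul_self_nonneg (d y)⟩ : (0 : ℝ) ∈ Icc (d x * d y) (d y * d y))
  exact mul_ne_zero (hne z hz) (hne y hy) hz₀

lemma mul_nonneg_of_ne_zero_on_Ioc {d : ℝ → ℝ} {a c : ℝ} (hac : a < c)
    (hd : ContinuousOn d (Icc a c)) (hne : ∀ x ∈ Ioc a c, d x ≠ 0) :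
    ∀ x ∈ Icc a c, 0 ≤ d x * d c := by
  have hIoc : ∀ x ∈ Ioc a c, 0 ≤ d x * d c := fun x hx =>
    (mul_pos_of_continuousOn_of_ne_zero isPreconnected_Ioc (hd.mono Ioc_subset_Icc_self) hne hx
      (right_mem_Ioc.2 hac)).le
  rw [← closure_Ioc hac.ne] at hd ⊢
  exact fun x hx => le_on_closure hIoc continuousOn_const (hd.mul continuousOn_const) hx

/- Continuous induction on the set of `y` such that `d` vanishes on `[a, y]`: at the first point
where it cannot be continued, `d` is nonzero, hence of constant sign, immediately to the right. -/
lemma exists_Icc_mul_nonneg {d : ℝ → ℝ} {a b : ℝ} (hd : Continuous d)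
    (hzero : ∀ x ∈ Ici a, (∃ᶠ y in 𝓝[>] x, d y = 0) → ∀ᶠ y in 𝓝[>] x, d y = 0)
    (hab : a ≤ b) (hb : d b ≠ 0) :
    ∃ c, a < c ∧ d c ≠ 0 ∧ ∀ x ∈ Icc a c, 0 ≤ d x * d c := by
  by_contra! hnone
  have hzero_right : ∀ x ∈ Ici a, (∀ y ∈ Ico a x, d y = 0) → ∀ᶠ y in 𝓝[>] x, d y = 0 := by
    intro x hx hleft
    refine hzero x hx fun hne => ?_
    obtain ⟨c, hxc, hc⟩ := mem_nhdsGT_iff_exists_Ioc_subset.1 hne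
    obtain ⟨y, hy, hneg⟩ := hnone c (lt_of_le_of_lt hx hxc) (hc (right_mem_Ioc.2 hxc))
    rcases lt_or_ge y x with hyx | hxy
    · simp [hleft y ⟨hy.1, hyx⟩] at hneg
    · exact hneg.not_ge (mul_nonneg_of_ne_zero_on_Ioc hxc hd.continuousOn hc y ⟨hxy, hy.2⟩)
  have hclosed : IsClosed {x | d x = 0} := isClosed_eq hd continuous_const
  have ha : d a = 0 :=
    hclosed.mem_of_frequently_of_tendsto (hzero_right a self_mem_Ici (by simp)).frequently
      (tendsto_id'.2 nhdsWithin_le_nhds)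
  exact hb ((hclosed.inter isClosed_Icc).Icc_subset_of_forall_mem_nhdsGT_of_Icc_subset ha
    (fun x hx hsub => hzero_right x hx.1 fun y hy => hsub (Ico_subset_Icc_self hy))
    (right_mem_Icc.2 hab))

end RealFunctions

section PiecewiseAnalyticFunctions

lemma exists_and_not_add_one {P : ℤ → Prop} (hbot : ∀ᶠ j in atBot, P j)
    (htop : ∀ᶠ j in atTop, ¬ P j) : ∃ j, P j ∧ ¬ P (j + 1) := by
  obtain ⟨J, hJ⟩ := eventually_atTop.1 htop
  obtain ⟨j, hj, hmax⟩ := Int.exists_greatest_of_bdd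
    ⟨J, fun z hz => (not_le.1 fun hJz => hJ z hJz hz).le⟩ hbot.exists
  exact ⟨j, hj, fun hj' => by linarith [hmax (j + 1) hj']⟩

lemma exists_analyticAt_eventuallyEq_of_eqOn_Ico {ψ φ : ℝ → ℝ} {p q x : ℝ}
    (hφ : AnalyticOn ℝ φ (Icc p q)) (hψ : EqOn ψ φ (Ico p q)) (hx : x ∈ Icc p q) :
    ∃ g, AnalyticAt ℝ g x ∧ ψ =ᶠ[𝓝[Ico p q] x] g := by
  obtain ⟨g, hφg, hg⟩ := analyticWithinAt_iff_exists_analyticAt.1 (hφ x hx)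
  refine ⟨g, hg, (hψ.eventuallyEq_nhdsWithin).trans (hφg.filter_mono (nhdsWithin_mono x ?_))⟩
  exact Ico_subset_Icc_self.trans (subset_insert x _)

lemma eventuallyEq_of_frequently_eq_of_analyticAt {ψ₁ ψ₂ g₁ g₂ : ℝ → ℝ} {x : ℝ} {l : Filter ℝ}
    (hl : l ≤ 𝓝[≠] x) (hg₁ : AnalyticAt ℝ g₁ x) (hg₂ : AnalyticAt ℝ g₂ x)
    (h₁ : ψ₁ =ᶠ[l] g₁) (h₂ : ψ₂ =ᶠ[l] g₂) (hfreq : ∃ᶠ y in l, ψ₁ y = ψ₂ y) : ψ₁ =ᶠ[l] ψ₂ := by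
  have hfreq' : ∃ᶠ y in l, g₁ y = g₂ y := (hfreq.and_eventually (h₁.and h₂)).mono
    fun y ⟨hy, hy₁, hy₂⟩ => hy₁ ▸ hy₂ ▸ hy
  have hg : g₁ =ᶠ[𝓝 x] g₂ :=
    (hg₁.frequently_eq_iff_eventually_eq hg₂).1 (hfreq'.filter_mono hl)
  exact h₁.trans ((hg.filter_mono (hl.trans nhdsWithin_le_nhds)).trans h₂.symm)

namespace PiecewiseAnalytic

lemma exists_analyticAt_eventuallyEq_nhdsGT {ψ : ℝ → ℝ} (hψ : PiecewiseAnalytic ψ) (x : ℝ) :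
    ∃ g, AnalyticAt ℝ g x ∧ ψ =ᶠ[𝓝[>] x] g := by
  obtain ⟨-, κ, φ, -, -, hbot, htop, -, hφ, hψφ⟩ := hψ
  obtain ⟨j, hj, hj'⟩ := exists_and_not_add_one (P := fun j => κ j ≤ x)
    (hbot.eventually_le_atBot x) (by simpa using htop.eventually_gt_atTop x)
  rw [not_le] at hj'
  obtain ⟨g, hg, hψg⟩ := exists_analyticAt_eventuallyEq_of_eqOn_Ico (hφ j) (hψφ j) ⟨hj, hj'.le⟩
  refine ⟨g, hg, hψg.filter_mono (nhdsWithin_le_iff.2 ?_)⟩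
  filter_upwards [Ioo_mem_nhdsGT hj'] with y hy using ⟨hj.trans hy.1.le, hy.2⟩

lemma exists_analyticAt_eventuallyEq_nhdsLT {ψ : ℝ → ℝ} (hψ : PiecewiseAnalytic ψ) (x : ℝ) :
    ∃ g, AnalyticAt ℝ g x ∧ ψ =ᶠ[𝓝[<] x] g := by
  obtain ⟨-, κ, φ, -, -, hbot, htop, -, hφ, hψφ⟩ := hψ
  obtain ⟨j, hj, hj'⟩ := exists_and_not_add_one (P := fun j => κ j < x)
    (hbot.eventually_lt_atBot x) (by simpa using htop.eventually_ge_atTop x)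
  rw [not_lt] at hj'
  obtain ⟨g, hg, hψg⟩ := exists_analyticAt_eventuallyEq_of_eqOn_Ico (hφ j) (hψφ j) ⟨hj.le, hj'⟩
  refine ⟨g, hg, hψg.filter_mono (nhdsWithin_le_iff.2 ?_)⟩
  filter_upwards [Ioo_mem_nhdsLT hj] with y hy using ⟨hy.1.le, hy.2.trans_le hj'⟩

lemma eventuallyEq_nhdsGT_of_frequently {ψ₁ ψ₂ : ℝ → ℝ} (h₁ : PiecewiseAnalytic ψ₁)
    (h₂ : PiecewiseAnalytic ψ₂) (x : ℝ) (hfreq : ∃ᶠ y in 𝓝[>] x, ψ₁ y = ψ₂ y) :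
    ψ₁ =ᶠ[𝓝[>] x] ψ₂ := by
  obtain ⟨g₁, hg₁, hψ₁⟩ := h₁.exists_analyticAt_eventuallyEq_nhdsGT x
  obtain ⟨g₂, hg₂, hψ₂⟩ := h₂.exists_analyticAt_eventuallyEq_nhdsGT x
  exact eventuallyEq_of_frequently_eq_of_analyticAt (nhdsGT_le_nhdsNE x) hg₁ hg₂ hψ₁ hψ₂ hfreq

lemma eventuallyEq_nhdsLT_of_frequently {ψ₁ ψ₂ : ℝ → ℝ} (h₁ : PiecewiseAnalytic ψ₁)
    (h₂ : PiecewiseAnalytic ψ₂) (x : ℝ) (hfreq : ∃ᶠ y in 𝓝[<] x, ψ₁ y = ψ₂ y) :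
    ψ₁ =ᶠ[𝓝[<] x] ψ₂ := by
  obtain ⟨g₁, hg₁, hψ₁⟩ := h₁.exists_analyticAt_eventuallyEq_nhdsLT x
  obtain ⟨g₂, hg₂, hψ₂⟩ := h₂.exists_analyticAt_eventuallyEq_nhdsLT x
  exact eventuallyEq_of_frequently_eq_of_analyticAt (nhdsLT_le_nhdsNE x) hg₁ hg₂ hψ₁ hψ₂ hfreq

end PiecewiseAnalytic

end PiecewiseAnalyticFunctions

section ParabolicOperator

/-- The value at `(t, x)` of `∂ₜw - a ∂ₓₓw - β ∂ₓw`, the parabolic operator with diffusion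
coefficient `a` and drift `β`. The first argument of `w` is time; derivatives are two-sided and take
junk values unless `ParabolicDifferentiableAt w t x`. -/
noncomputable def parabolicOp (a β : ℝ → ℝ) (w : ℝ → ℝ → ℝ) (t x : ℝ) : ℝ :=
  deriv (fun s => w s x) t - (a x * deriv (deriv (w t)) x + β x * deriv (w t) x)

/-- The function `w` has the derivatives `∂ₜw` and `∂ₓₓw` at `(t, x)`, so that
`parabolicOp a β w t x` is meaningful. The derivative `∂ₓw(t, ·)` is required near `x`, as `∂ₓₓw`
presupposes. -/
structure ParabolicDifferentiableAt (w : ℝ → ℝ → ℝ) (t x : ℝ) : Prop where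
  time : DifferentiableAt ℝ (fun s => w s x) t
  space : ∀ᶠ y in 𝓝 x, DifferentiableAt ℝ (w t) y
  deriv_space : DifferentiableAt ℝ (deriv (w t)) x

lemma eventuallyEq_deriv_sub {v w : ℝ → ℝ} {x : ℝ} (hv : ∀ᶠ y in 𝓝 x, DifferentiableAt ℝ v y)
    (hw : ∀ᶠ y in 𝓝 x, DifferentiableAt ℝ w y) :
    deriv (v - w) =ᶠ[𝓝 x] deriv v - deriv w := by
  filter_upwards [hv, hw] with y hvy hwy using deriv_sub hvy hwy

lemma ParabolicDifferentiableAt.sub {v w : ℝ → ℝ → ℝ} {t x : ℝ}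
    (hv : ParabolicDifferentiableAt v t x) (hw : ParabolicDifferentiableAt w t x) :
    ParabolicDifferentiableAt (v - w) t x where
  time := hv.time.sub hw.time
  space := by filter_upwards [hv.space, hw.space] with y hvy hwy using hvy.sub hwy
  deriv_space := (hv.deriv_space.sub hw.deriv_space).congr_of_eventuallyEq
    (eventuallyEq_deriv_sub hv.space hw.space)

lemma ParabolicDifferentiableAt.const_smul {w : ℝ → ℝ → ℝ} {t x : ℝ}
    (hw : ParabolicDifferentiableAt w t x) (c : ℝ) : ParabolicDifferentiableAt (c • w) t x where
  time := hw.time.const_smul c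
  space := hw.space.mono fun _ hy => hy.const_smul c
  deriv_space := by
    have hderiv : deriv (c • w t) = c • deriv (w t) :=
      funext fun _ => deriv_const_smul_field c (w t)
    rw [Pi.smul_apply, hderiv]
    exact hw.deriv_space.const_smul c

lemma parabolicOp_sub {a β : ℝ → ℝ} {v w : ℝ → ℝ → ℝ} {t x : ℝ}
    (hv : ParabolicDifferentiableAt v t x) (hw : ParabolicDifferentiableAt w t x) :
    parabolicOp a β (v - w) t x = parabolicOp a β v t x - parabolicOp a β w t x := by
  have htime :
      deriv (fun s => (v - w) s x) t = deriv (fun s => v s x) t - deriv (fun s => w s x) t :=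
    deriv_sub hv.time hw.time
  have hspace : deriv (v t - w t) x = deriv (v t) x - deriv (w t) x :=
    deriv_sub hv.space.self_of_nhds hw.space.self_of_nhds
  have hspace₂ : deriv (deriv (v t - w t)) x = deriv (deriv (v t)) x - deriv (deriv (w t)) x :=
    (eventuallyEq_deriv_sub hv.space hw.space).deriv_eq.trans
      (deriv_sub hv.deriv_space hw.deriv_space)
  rw [parabolicOp, htime, Pi.sub_apply, hspace, hspace₂, parabolicOp, parabolicOp]
  ring

lemma parabolicOp_const_smul (a β : ℝ → ℝ) (c : ℝ) (w : ℝ → ℝ → ℝ) (t x : ℝ) :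
    parabolicOp a β (c • w) t x = c * parabolicOp a β w t x := by
  have htime : deriv (fun s => (c • w) s x) t = c * deriv (fun s => w s x) t :=
    deriv_const_smul_field c _
  have hspace : deriv (c • w t) = c • deriv (w t) :=
    funext fun _ => deriv_const_smul_field c _
  rw [parabolicOp, htime, Pi.smul_apply, hspace, deriv_const_smul_field, parabolicOp]
  simp only [Pi.smul_apply, smul_eq_mul]
  ring

lemma parabolicOp_nonpos_of_isMinOn {a β : ℝ → ℝ} {z : ℝ → ℝ → ℝ} {r s y : ℝ} (ha : 0 ≤ a y)
    (hz : ParabolicDifferentiableAt z s y) (hrs : r < s)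
    (htime : IsMinOn (fun t => z t y) (Icc r s) s) (hspace : IsLocalMin (z s) y) :
    parabolicOp a β z s y ≤ 0 := by
  rw [← segment_eq_Icc hrs.le, segment_symm] at htime
  have htime' : 0 ≤ (r - s) * deriv (fun t => z t y) s :=
    mul_deriv_nonneg_of_isMinOn_segment hz.time htime
  have hspace₂ : 0 ≤ deriv (deriv (z s)) y :=
    deriv_deriv_nonneg_of_isLocalMin hz.space.self_of_nhds.continuousAt hspace
  have htime_nonpos : deriv (fun t => z t y) s ≤ 0 :=
    nonpos_of_mul_nonneg_right htime' (sub_neg.2 hrs)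
  rw [parabolicOp, hspace.deriv_eq_zero]
  linarith [mul_nonneg ha hspace₂]

theorem nonneg_of_parabolicOp_pos {a β : ℝ → ℝ} {z : ℝ → ℝ → ℝ} {t₀ t₁ x₁ x₂ : ℝ}
    (hcont : ContinuousOn (fun p : ℝ × ℝ => z p.1 p.2) (Icc t₀ t₁ ×ˢ Icc x₁ x₂))
    (ha : ∀ x ∈ Ioo x₁ x₂, 0 ≤ a x)
    (hdiff : ∀ t ∈ Ioc t₀ t₁, ∀ x ∈ Ioo x₁ x₂, ParabolicDifferentiableAt z t x)
    (hop : ∀ t ∈ Ioc t₀ t₁, ∀ x ∈ Ioo x₁ x₂, 0 < parabolicOp a β z t x)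
    (hinit : ∀ x ∈ Icc x₁ x₂, 0 ≤ z t₀ x) (hleft : ∀ t ∈ Icc t₀ t₁, 0 ≤ z t x₁)
    (hright : ∀ t ∈ Icc t₀ t₁, 0 ≤ z t x₂) :
    ∀ t ∈ Icc t₀ t₁, ∀ x ∈ Icc x₁ x₂, 0 ≤ z t x := by
  intro t ht x hx
  obtain ⟨⟨s, y⟩, ⟨hs, hy⟩, hmin⟩ :=
    (isCompact_Icc.prod isCompact_Icc).exists_isMinOn ⟨(t, x), ht, hx⟩ hcont
  have hle : ∀ t ∈ Icc t₀ t₁, ∀ x ∈ Icc x₁ x₂, z s y ≤ z t x :=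
    fun t ht x hx => hmin (show (t, x) ∈ _ from ⟨ht, hx⟩)
  refine le_trans ?_ (hle t ht x hx)
  rcases eq_or_lt_of_le hs.1 with rfl | hs₀
  · exact hinit y hy
  rcases eq_or_lt_of_le hy.1 with rfl | hy₁
  · exact hleft s hs
  rcases eq_or_lt_of_le hy.2 with rfl | hy₂
  · exact hright s hs
  have hs' : s ∈ Ioc t₀ t₁ := ⟨hs₀, hs.2⟩
  have hy' : y ∈ Ioo x₁ x₂ := ⟨hy₁, hy₂⟩
  have hnonpos : parabolicOp a β z s y ≤ 0 :=
    parabolicOp_nonpos_of_isMinOn (ha y hy') (hdiff s hs' y hy') hs₀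
      (fun t ht => hle t ⟨ht.1, ht.2.trans hs.2⟩ y hy)
      (mem_of_superset (Icc_mem_nhds hy₁ hy₂) (hle s hs))
  exact absurd (hop s hs' y hy') hnonpos.not_gt

end ParabolicOperator

section HopfLemma

/-- The travelling exponential `exp (α (x - x₂ + k t)) - 1`, used as a barrier in
`deriv_pos_of_parabolicOp_nonneg`. Its zero set is the line `x = x₂ - k t`, which the Hopf lemma
draws from the corner `(0, x₂)` to the point at which the derivative is examined. -/
noncomputable def expBarrier (α k x₂ t x : ℝ) : ℝ :=
  Real.exp (α * (x - x₂ + k * t)) - 1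

lemma expBarrier_nonpos {α k x₂ t x : ℝ} (hα : 0 ≤ α) (h : x - x₂ + k * t ≤ 0) :
    expBarrier α k x₂ t x ≤ 0 :=
  sub_nonpos.2 (Real.exp_le_one_iff.2 (mul_nonpos_of_nonneg_of_nonpos hα h))

lemma hasDerivAt_expBarrier_time (α k x₂ t x : ℝ) :
    HasDerivAt (fun s => expBarrier α k x₂ s x)
      (α * k * Real.exp (α * (x - x₂ + k * t))) t := by
  have hexponent : HasDerivAt (fun s => α * (x - x₂ + k * s)) (α * (k * 1)) t :=
    (((hasDerivAt_id t).const_mul k).const_add (x - x₂)).const_mul α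
  exact (hexponent.exp.sub_const 1).congr_deriv (by ring)

lemma hasDerivAt_exp_mul_sub_add (α k x₂ t x : ℝ) :
    HasDerivAt (fun y => Real.exp (α * (y - x₂ + k * t)))
      (α * Real.exp (α * (x - x₂ + k * t))) x := by
  have hexponent : HasDerivAt (fun y => α * (y - x₂ + k * t)) (α * 1) x :=
    (((hasDerivAt_id x).sub_const x₂).add_const (k * t)).const_mul α
  exact hexponent.exp.congr_deriv (by ring)

lemma hasDerivAt_expBarrier_space (α k x₂ t x : ℝ) :
    HasDerivAt (expBarrier α k x₂ t) (α * Real.exp (α * (x - x₂ + k * t))) x :=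
  (hasDerivAt_exp_mul_sub_add α k x₂ t x).sub_const 1

lemma hasDerivAt_deriv_expBarrier_space (α k x₂ t x : ℝ) :
    HasDerivAt (deriv (expBarrier α k x₂ t)) (α * (α * Real.exp (α * (x - x₂ + k * t)))) x := by
  rw [funext fun y => (hasDerivAt_expBarrier_space α k x₂ t y).deriv]
  exact (hasDerivAt_exp_mul_sub_add α k x₂ t x).const_mul α

lemma parabolicDifferentiableAt_expBarrier (α k x₂ t x : ℝ) :
    ParabolicDifferentiableAt (expBarrier α k x₂) t x where
  time := (hasDerivAt_expBarrier_time α k x₂ t x).differentiableAt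
  space := .of_forall fun y => (hasDerivAt_expBarrier_space α k x₂ t y).differentiableAt
  deriv_space := (hasDerivAt_deriv_expBarrier_space α k x₂ t x).differentiableAt

lemma parabolicOp_expBarrier (a β : ℝ → ℝ) (α k x₂ t x : ℝ) :
    parabolicOp a β (expBarrier α k x₂) t x =
      α * Real.exp (α * (x - x₂ + k * t)) * (k - (a x * α + β x)) := by
  rw [parabolicOp, (hasDerivAt_expBarrier_time α k x₂ t x).deriv,
    (hasDerivAt_expBarrier_space α k x₂ t x).deriv,
    (hasDerivAt_deriv_expBarrier_space α k x₂ t x).deriv]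
  ring

lemma exists_pos_forall_lt_mul_add {X : Type*} [TopologicalSpace X] {K : Set X} {a β : X → ℝ}
    (hK : IsCompact K) (ha : ContinuousOn a K) (ha₀ : ∀ x ∈ K, 0 < a x) (hβ : ContinuousOn β K)
    (k : ℝ) : ∃ α, 0 < α ∧ ∀ x ∈ K, k < a x * α + β x := by
  obtain ⟨C, hC⟩ := hK.bddAbove_image
    ((continuousOn_const.sub hβ).div ha fun x hx => (ha₀ x hx).ne' : ContinuousOn
      (fun x => (k - β x) / a x) K)
  refine ⟨max C 0 + 1, by positivity, fun x hx => ?_⟩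
  have hquot : (k - β x) / a x < max C 0 + 1 :=
    ((hC (mem_image_of_mem _ hx)).trans (le_max_left C 0)).trans_lt (lt_add_one _)
  rw [div_lt_iff₀ (ha₀ x hx)] at hquot
  linarith

theorem expBarrier_le_of_parabolicOp_nonneg {a β : ℝ → ℝ} {w : ℝ → ℝ → ℝ} {x₁ x₂ τ α k η : ℝ}
    (ha : ∀ x ∈ Ioo x₁ x₂, 0 ≤ a x) (hα : 0 < α) (hk : 0 ≤ k) (hkτ : k * τ ≤ x₂ - x₁) (hη : 0 < η)
    (hαk : ∀ x ∈ Ioo x₁ x₂, k < a x * α + β x)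
    (hcont : ContinuousOn (fun p : ℝ × ℝ => w p.1 p.2) (Icc 0 τ ×ˢ Icc x₁ x₂))
    (hdiff : ∀ t ∈ Ioc 0 τ, ∀ x ∈ Ioo x₁ x₂, ParabolicDifferentiableAt w t x)
    (hop : ∀ t ∈ Ioc 0 τ, ∀ x ∈ Ioo x₁ x₂, 0 ≤ parabolicOp a β w t x)
    (hinit : ∀ x ∈ Icc x₁ x₂, 0 ≤ w 0 x) (hleft : ∀ t ∈ Icc 0 τ, 0 ≤ w t x₁)
    (hright : ∀ t ∈ Icc 0 τ, η * expBarrier α k x₂ t x₂ ≤ w t x₂) :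
    ∀ t ∈ Icc 0 τ, ∀ x ∈ Icc x₁ x₂, η * expBarrier α k x₂ t x ≤ w t x := by
  have hbarrier : ∀ t x, ParabolicDifferentiableAt (η • expBarrier α k x₂) t x :=
    fun t x => (parabolicDifferentiableAt_expBarrier α k x₂ t x).const_smul η
  suffices hnonneg : ∀ t ∈ Icc 0 τ, ∀ x ∈ Icc x₁ x₂, 0 ≤ (w - η • expBarrier α k x₂) t x from
    fun t ht x hx => sub_nonneg.1 (hnonneg t ht x hx)
  refine nonneg_of_parabolicOp_pos (β := β) ?_ ha
    (fun t ht x hx => (hdiff t ht x hx).sub (hbarrier t x)) (fun t ht x hx => ?_)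
    (fun x hx => ?_) (fun t ht => ?_) (fun t ht => sub_nonneg.2 (hright t ht))
  · refine hcont.sub (Continuous.continuousOn ?_)
    simp only [Pi.smul_apply, smul_eq_mul, expBarrier]
    fun_prop
  · rw [parabolicOp_sub (hdiff t ht x hx) (hbarrier t x), parabolicOp_const_smul,
      parabolicOp_expBarrier]
    have hneg : η * (α * Real.exp (α * (x - x₂ + k * t)) * (k - (a x * α + β x))) < 0 :=
      mul_neg_of_pos_of_neg hη
        (mul_neg_of_pos_of_neg (by positivity) (sub_neg.2 (hαk x hx)))
    linarith [hop t ht x hx]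
  · have hbase : expBarrier α k x₂ 0 x ≤ 0 := expBarrier_nonpos hα.le (by linarith [hx.2])
    exact sub_nonneg.2 ((mul_nonpos_of_nonneg_of_nonpos hη.le hbase).trans (hinit x hx))
  · have hside : expBarrier α k x₂ t x₁ ≤ 0 :=
      expBarrier_nonpos hα.le (by linarith [mul_le_mul_of_nonneg_left ht.2 hk])
    exact sub_nonneg.2 ((mul_nonpos_of_nonneg_of_nonpos hη.le hside).trans (hleft t ht))

/- The barrier vanishes at `(τ, x₁)`, where it has positive slope, because its speed `k` is chosen
such that its zero line `x = x₂ - k t` ends there. -/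
theorem deriv_pos_of_parabolicOp_nonneg {a β : ℝ → ℝ} {w : ℝ → ℝ → ℝ} {x₁ x₂ τ c : ℝ}
    (hx : x₁ < x₂) (hτ : 0 < τ) (hc : 0 < c)
    (ha : ContinuousOn a (Icc x₁ x₂)) (ha₀ : ∀ x ∈ Icc x₁ x₂, 0 < a x)
    (hβ : ContinuousOn β (Icc x₁ x₂))
    (hcont : ContinuousOn (fun p : ℝ × ℝ => w p.1 p.2) (Icc 0 τ ×ˢ Icc x₁ x₂))
    (hdiff : ∀ t ∈ Ioc 0 τ, ∀ x ∈ Ioo x₁ x₂, ParabolicDifferentiableAt w t x)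
    (hcorner_diff : DifferentiableAt ℝ (w τ) x₁)
    (hop : ∀ t ∈ Ioc 0 τ, ∀ x ∈ Ioo x₁ x₂, 0 ≤ parabolicOp a β w t x)
    (hinit : ∀ x ∈ Icc x₁ x₂, 0 ≤ w 0 x) (hleft : ∀ t ∈ Icc 0 τ, 0 ≤ w t x₁)
    (hright : ∀ t ∈ Icc 0 τ, c * t ≤ w t x₂) (hcorner : w τ x₁ = 0) :
    0 < deriv (w τ) x₁ := by
  obtain ⟨k, hk, hkτ⟩ : ∃ k, 0 < k ∧ k * τ = x₂ - x₁ :=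
    ⟨(x₂ - x₁) / τ, div_pos (sub_pos.2 hx) hτ, div_mul_cancel₀ _ hτ.ne'⟩
  obtain ⟨α, hα, hαk⟩ := exists_pos_forall_lt_mul_add isCompact_Icc ha ha₀ hβ k
  obtain ⟨η, hη, hηc⟩ : ∃ η, 0 < η ∧ η * (α * k * Real.exp (α * (k * τ))) = c :=
    ⟨c / (α * k * Real.exp (α * (k * τ))), by positivity, div_mul_cancel₀ _ (by positivity)⟩
  have hright' : ∀ t ∈ Icc 0 τ, η * expBarrier α k x₂ t x₂ ≤ w t x₂ := fun t ht => by
    have hexp : expBarrier α k x₂ t x₂ ≤ α * (k * t) * Real.exp (α * (k * τ)) := by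
      rw [expBarrier, sub_self, zero_add]
      have := ht.1
      exact exp_sub_one_le_mul_exp (by positivity) (by gcongr; exact ht.2)
    calc η * expBarrier α k x₂ t x₂
        ≤ η * (α * (k * t) * Real.exp (α * (k * τ))) := by gcongr
      _ = c * t := by rw [← hηc]; ring
      _ ≤ w t x₂ := hright t ht
  have hle := expBarrier_le_of_parabolicOp_nonneg
    (fun x hx => (ha₀ x (Ioo_subset_Icc_self hx)).le) hα hk.le hkτ.le hη
    (fun x hx => hαk x (Ioo_subset_Icc_self hx)) hcont hdiff hop hinit hleft hright'
    τ (right_mem_Icc.2 hτ.le)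
  have hexponent : α * (x₁ - x₂ + k * τ) = 0 := by rw [hkτ]; ring
  have hbarrier := (hasDerivAt_expBarrier_space α k x₂ τ x₁).const_mul η
  rw [hexponent, Real.exp_zero, mul_one] at hbarrier
  have hz := hcorner_diff.hasDerivAt.sub hbarrier
  have hslope : 0 ≤ (x₂ - x₁) * deriv (w τ - fun x => η * expBarrier α k x₂ τ x) x₁ := by
    refine mul_deriv_nonneg_of_isMinOn_segment hz.differentiableAt ?_
    rw [segment_eq_Icc hx.le]
    intro x hx
    simpa [hcorner, expBarrier, hexponent] using hle x hx
  rw [hz.deriv] at hslope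
  linarith [nonneg_of_mul_nonneg_right hslope (sub_pos.2 hx), mul_pos hη hα]

end HopfLemma

section ClassicalSolutions

namespace IsClassicalSolution

variable {T t x : ℝ} {b σ f : ℝ → ℝ} {u : ℝ → ℝ → ℝ}

lemma parabolicDifferentiableAt (hu : IsClassicalSolution T b σ f u) (ht : t ∈ Ico 0 T) (x : ℝ) :
    ParabolicDifferentiableAt u t x := by
  obtain ⟨-, htime, hspace, hspace₂, -⟩ := hu
  exact ⟨htime t ht x, .of_forall (hspace t ht), hspace₂ t ht x⟩

lemma parabolicOp_eq_zero (hu : IsClassicalSolution T b σ f u) (ht : t ∈ Ico 0 T) (x : ℝ) :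
    parabolicOp (fun x => 1 / 2 * σ x ^ 2) b u t x = 0 := by
  obtain ⟨-, -, -, -, -, -, -, hpde, -⟩ := hu
  exact sub_eq_zero.2 (hpde t ht x)

lemma initial (hu : IsClassicalSolution T b σ f u) : u 0 = f := by
  obtain ⟨-, -, -, -, -, -, -, -, hinit⟩ := hu
  exact funext hinit

lemma continuousOn_deriv_space (hu : IsClassicalSolution T b σ f u) :
    ContinuousOn (fun p : ℝ × ℝ => deriv (u p.1) p.2) (Ico 0 T ×ˢ univ) := by
  obtain ⟨-, -, -, -, -, hspace, -⟩ := hu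
  exact hspace

lemma hasDerivAt_zero (hu : IsClassicalSolution T b σ f u) (hT : 0 < T) (x : ℝ) :
    HasDerivAt (fun s => u s x) (1 / 2 * σ x ^ 2 * deriv (deriv f) x + b x * deriv f x) 0 := by
  have hmem : (0 : ℝ) ∈ Ico 0 T := left_mem_Ico.2 hT
  rw [← hu.initial, ← sub_eq_zero.1 (hu.parabolicOp_eq_zero hmem x)]
  exact (hu.parabolicDifferentiableAt hmem x).time.hasDerivAt

lemma continuous_deriv_initial (hu : IsClassicalSolution T b σ f u) (hT : 0 < T) :
    Continuous (deriv f) := by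
  rw [← hu.initial]
  exact hu.continuousOn_deriv_space.comp_continuous (by fun_prop : Continuous fun x => ((0 : ℝ), x))
    fun x => ⟨left_mem_Ico.2 hT, mem_univ x⟩

lemma continuous_drift (hu : IsClassicalSolution T b σ f u) (hT : 0 < T) (hσ : Continuous σ)
    (hf : ∀ x, deriv f x ≠ 0) : Continuous b := by
  have hb : b = fun x =>
      (deriv (fun s => u s x) 0 - 1 / 2 * σ x ^ 2 * deriv (deriv (u 0)) x) / deriv f x := by
    funext x
    rw [(hu.hasDerivAt_zero hT x).deriv, hu.initial, add_sub_cancel_left,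
      mul_div_cancel_right₀ _ (hf x)]
  have hf_cont := hu.continuous_deriv_initial hT
  have hslice : ∀ x : ℝ, ((0 : ℝ), x) ∈ Ico 0 T ×ˢ univ :=
    fun x => ⟨left_mem_Ico.2 hT, mem_univ x⟩
  obtain ⟨-, -, -, -, htime, -, hspace₂, -⟩ := hu
  have htime₀ : Continuous fun x => deriv (fun s => u s x) 0 :=
    htime.comp_continuous (by fun_prop : Continuous fun x => ((0 : ℝ), x)) hslice
  have hspace₂₀ : Continuous (deriv (deriv (u 0))) :=
    hspace₂.comp_continuous (by fun_prop : Continuous fun x => ((0 : ℝ), x)) hslice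
  rw [hb]
  exact (htime₀.sub ((continuous_const.mul (hσ.pow 2)).mul hspace₂₀)).div hf_cont hf

lemma eventually_forall_mul_deriv_pos (hu : IsClassicalSolution T b σ f u) (hT : 0 < T) {c : ℝ}
    {K : Set ℝ} (hK : IsCompact K) (hf : ∀ x ∈ K, 0 < c * deriv f x) :
    ∀ᶠ t in 𝓝[>] 0, ∀ x ∈ K, 0 < c * deriv (u t) x := by
  have hlocal : ∀ x ∈ K, ∀ᶠ p : ℝ × ℝ in 𝓝 (0, x),
      p.1 ∈ Ico 0 T → 0 < c * deriv (u p.1) p.2 := by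
    intro x hx
    have hcont := (continuousOn_const (c := c)).mul hu.continuousOn_deriv_space (0, x)
      ⟨left_mem_Ico.2 hT, mem_univ x⟩
    have hpos := hcont.eventually_const_lt (u := 0) (by simpa [hu.initial] using hf x hx)
    filter_upwards [eventually_nhdsWithin_iff.1 hpos] with p hp hmem using hp ⟨hmem, mem_univ _⟩
  filter_upwards [nhdsWithin_le_nhds (hK.eventually_forall_of_forall_eventually
    (P := fun t x => t ∈ Ico 0 T → 0 < c * deriv (u t) x) hlocal),
    Ioo_mem_nhdsGT hT] with t ht hmem x hx using ht x hx (Ioo_subset_Ico_self hmem)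

lemma neg_space (hu : IsClassicalSolution T b σ f u) :
    IsClassicalSolution T (fun x => -b (-x)) (fun x => σ (-x)) (fun x => f (-x))
      (fun t x => u t (-x)) := by
  have hspace_neg : ∀ t, deriv (fun y => u t (-y)) = fun x => -deriv (u t) (-x) :=
    fun t => funext (deriv_comp_neg (u t))
  have hspace₂_neg : ∀ t, deriv (deriv fun y => u t (-y)) = fun x => deriv (deriv (u t)) (-x) := by
    intro t
    funext x
    rw [hspace_neg, deriv.fun_neg, deriv_comp_neg, neg_neg]
  obtain ⟨hcont, htime, hspace, hspace₂, htime_cont, hspace_cont, hspace₂_cont, hpde, hinit⟩ := hu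
  have hneg : ∀ {g : ℝ × ℝ → ℝ}, ContinuousOn g (Ico 0 T ×ˢ univ) →
      ContinuousOn (fun p : ℝ × ℝ => g (p.1, -p.2)) (Ico 0 T ×ˢ univ) :=
    fun hg => hg.comp (by fun_prop) fun p hp => ⟨hp.1, mem_univ _⟩
  refine ⟨hneg hcont, fun t ht x => htime t ht (-x),
    fun t ht x => (hspace t ht (-x)).comp x differentiableAt_id.neg, fun t ht x => ?_,
    hneg htime_cont, ?_, ?_, fun t ht x => ?_, fun x => hinit (-x)⟩
  · rw [hspace_neg]
    exact ((hspace₂ t ht (-x)).comp x differentiableAt_id.neg).neg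
  · simp only [hspace_neg]
    exact (hneg hspace_cont).neg
  · simp only [hspace₂_neg]
    exact hneg hspace₂_cont
  · rw [hspace₂_neg, hspace_neg, hpde t ht (-x)]
    ring

variable {b₁ b₂ : ℝ → ℝ} {u₁ u₂ : ℝ → ℝ → ℝ} {x₀ : ℝ}

lemma parabolicOp_sub_eq_mul_deriv (h₁ : IsClassicalSolution T b₁ σ f u₁)
    (h₂ : IsClassicalSolution T b₂ σ f u₂) (ht : t ∈ Ico 0 T) (x : ℝ) :
    parabolicOp (fun x => 1 / 2 * σ x ^ 2) b₁ (u₁ - u₂) t x =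
      (b₁ x - b₂ x) * deriv (u₂ t) x := by
  have hop₂ := h₂.parabolicOp_eq_zero ht x
  rw [parabolicOp_sub (h₁.parabolicDifferentiableAt ht x) (h₂.parabolicDifferentiableAt ht x),
    h₁.parabolicOp_eq_zero ht x, parabolicOp]
  rw [parabolicOp] at hop₂
  linarith

lemma hasDerivAt_sub_zero (h₁ : IsClassicalSolution T b₁ σ f u₁)
    (h₂ : IsClassicalSolution T b₂ σ f u₂) (hT : 0 < T) (x : ℝ) :
    HasDerivAt (fun t => (u₁ - u₂) t x) ((b₁ x - b₂ x) * deriv f x) 0 :=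
  ((h₁.hasDerivAt_zero hT x).sub (h₂.hasDerivAt_zero hT x)).congr_deriv (by ring)

theorem mul_sub_deriv_pos (h₁ : IsClassicalSolution T b₁ σ f u₁)
    (h₂ : IsClassicalSolution T b₂ σ f u₂) {τ x₁ s c : ℝ} (hx : x₀ < x₁) (hτ : τ ∈ Ioo 0 T)
    (hc : 0 < c) (hσ : ContinuousOn σ (Icc x₀ x₁)) (hσ₀ : ∀ x ∈ Icc x₀ x₁, σ x ≠ 0)
    (hb : ContinuousOn b₁ (Icc x₀ x₁))
    (hsource : ∀ t ∈ Ioc 0 τ, ∀ x ∈ Ioo x₀ x₁, 0 ≤ s * ((b₁ x - b₂ x) * deriv (u₂ t) x))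
    (hleft : ∀ t ∈ Ioc 0 τ, u₁ t x₀ = u₂ t x₀)
    (hright : ∀ t ∈ Ioc 0 τ, c * t ≤ s * (u₁ t x₁ - u₂ t x₁)) :
    0 < s * (deriv (u₁ τ) x₀ - deriv (u₂ τ) x₀) := by
  have hmem : ∀ t ∈ Icc 0 τ, t ∈ Ico 0 T := fun t ht => ⟨ht.1, ht.2.trans_lt hτ.2⟩
  have hdiff₁ := fun t ht => h₁.parabolicDifferentiableAt (hmem t ht)
  have hdiff₂ := fun t ht => h₂.parabolicDifferentiableAt (hmem t ht)
  have hdiff : ∀ t ∈ Icc 0 τ, ∀ x, ParabolicDifferentiableAt (s • (u₁ - u₂)) t x :=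
    fun t ht x => ((hdiff₁ t ht x).sub (hdiff₂ t ht x)).const_smul s
  have hτ_mem : τ ∈ Ioc 0 τ := right_mem_Ioc.2 hτ.1
  have hτ_mem' : τ ∈ Icc 0 τ := Ioc_subset_Icc_self hτ_mem
  have hzero : ∀ x, (s • (u₁ - u₂)) 0 x = 0 := fun x => by simp [h₁.initial, h₂.initial]
  have hleft_zero : ∀ t ∈ Ioc 0 τ, (s • (u₁ - u₂)) t x₀ = 0 := fun t ht => by simp [hleft t ht]
  have hcont : ContinuousOn (fun p : ℝ × ℝ => (s • (u₁ - u₂)) p.1 p.2) (Icc 0 τ ×ˢ Icc x₀ x₁) :=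
    (continuousOn_const.mul (h₁.1.sub h₂.1)).mono (prod_mono hmem (subset_univ _))
  have hderiv : deriv ((s • (u₁ - u₂)) τ) x₀ = s * (deriv (u₁ τ) x₀ - deriv (u₂ τ) x₀) := by
    rw [← deriv_sub (hdiff₁ τ hτ_mem' x₀).space.self_of_nhds
      (hdiff₂ τ hτ_mem' x₀).space.self_of_nhds]
    exact deriv_const_smul_field s _
  rw [← hderiv]
  refine deriv_pos_of_parabolicOp_nonneg (a := fun x => 1 / 2 * σ x ^ 2) hx hτ.1 hc (by fun_prop)
    (fun x hx => by have := hσ₀ x hx; positivity) hb hcont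
    (fun t ht x _ => hdiff t (Ioc_subset_Icc_self ht) x) (hdiff τ hτ_mem' x₀).space.self_of_nhds
    (fun t ht x hx => ?_) (fun x _ => (hzero x).ge) (fun t ht => ?_) (fun t ht => ?_)
    (hleft_zero τ hτ_mem)
  · rw [parabolicOp_const_smul,
      h₁.parabolicOp_sub_eq_mul_deriv h₂ (hmem t (Ioc_subset_Icc_self ht))]
    exact hsource t ht x hx
  · rcases ht.1.eq_or_lt with rfl | ht₀
    exacts [(hzero x₀).ge, (hleft_zero t ⟨ht₀, ht.2⟩).ge]
  · rcases ht.1.eq_or_lt with rfl | ht₀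
    exacts [by rw [hzero, mul_zero], hright t ⟨ht₀, ht.2⟩]

theorem eventually_deriv_ne (h₁ : IsClassicalSolution T b₁ σ f u₁)
    (h₂ : IsClassicalSolution T b₂ σ f u₂) (hT : 0 < T) (hσ : Continuous σ) (hσ₀ : ∀ x, σ x ≠ 0)
    (hf : ∀ x, deriv f x ≠ 0) {x₁ : ℝ} (hx : x₀ < x₁) (hne : b₁ x₁ ≠ b₂ x₁)
    (hsign : ∀ x ∈ Icc x₀ x₁, 0 ≤ (b₁ x - b₂ x) * (b₁ x₁ - b₂ x₁))
    (hobs : ∀ᶠ t in 𝓝[>] 0, u₁ t x₀ = u₂ t x₀) :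
    ∀ᶠ t in 𝓝[>] 0, deriv (u₁ t) x₀ ≠ deriv (u₂ t) x₀ := by
  set s := (b₁ x₁ - b₂ x₁) * deriv f x₁ with hs
  have hs₀ : 0 < s * s := mul_self_pos.2 (mul_ne_zero (sub_ne_zero.2 hne) (hf x₁))
  have hgrowth : ∀ᶠ t in 𝓝[>] 0, s * s / 2 * t ≤ s * (u₁ t x₁ - u₂ t x₁) := by
    simpa [h₁.initial, h₂.initial] using eventually_add_mul_sub_le_of_hasDerivWithinAt_Ioi
      ((h₁.hasDerivAt_sub_zero h₂ hT x₁).const_mul s).hasDerivWithinAt (half_lt_self hs₀)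
  have hderiv : ∀ᶠ t in 𝓝[>] 0, ∀ x ∈ Icc x₀ x₁, 0 < deriv f x₁ * deriv (u₂ t) x :=
    h₂.eventually_forall_mul_deriv_pos hT isCompact_Icc fun x _ =>
      mul_pos_of_continuousOn_of_ne_zero isPreconnected_univ
        (h₂.continuous_deriv_initial hT).continuousOn (fun x _ => hf x) (mem_univ x₁) (mem_univ x)
  filter_upwards [eventually_forall_Ioc_of_eventually_nhdsGT (hgrowth.and (hderiv.and hobs)),
    Ioo_mem_nhdsGT hT] with τ hτ hτT heq
  have hpos := h₁.mul_sub_deriv_pos h₂ hx hτT (half_pos hs₀) hσ.continuousOn (fun x _ => hσ₀ x)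
    (h₁.continuous_drift hT hσ hf).continuousOn (s := s) (fun t ht x hx => ?_)
    (fun t ht => (hτ t ht).2.2) (fun t ht => (hτ t ht).1)
  · rw [heq, sub_self, mul_zero] at hpos
    exact hpos.false
  · have hx' := Ioo_subset_Icc_self hx
    calc 0 ≤ (b₁ x - b₂ x) * (b₁ x₁ - b₂ x₁) * (deriv f x₁ * deriv (u₂ t) x) :=
          mul_nonneg (hsign x hx') ((hτ t ht).2.1 x hx').le
      _ = s * ((b₁ x - b₂ x) * deriv (u₂ t) x) := by rw [hs]; ring

theorem drift_eqOn_Ici (h₁ : IsClassicalSolution T b₁ σ f u₁)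
    (h₂ : IsClassicalSolution T b₂ σ f u₂) (hT : 0 < T) (hσ : Continuous σ) (hσ₀ : ∀ x, σ x ≠ 0)
    (hf : ∀ x, deriv f x ≠ 0)
    (hright : ∀ x ∈ Ici x₀, (∃ᶠ y in 𝓝[>] x, b₁ y = b₂ y) → b₁ =ᶠ[𝓝[>] x] b₂)
    (hobs : ∀ᶠ t in 𝓝[>] 0, u₁ t x₀ = u₂ t x₀)
    (hobsd : ∃ᶠ t in 𝓝[>] 0, deriv (u₁ t) x₀ = deriv (u₂ t) x₀) : EqOn b₁ b₂ (Ici x₀) := by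
  intro x hx
  by_contra hne
  obtain ⟨x₁, hx₁, hne₁, hsign⟩ := exists_Icc_mul_nonneg (d := fun x => b₁ x - b₂ x)
    ((h₁.continuous_drift hT hσ hf).sub (h₂.continuous_drift hT hσ hf))
    (by simpa only [sub_eq_zero, EventuallyEq] using hright) hx (sub_ne_zero.2 hne)
  exact hobsd (h₁.eventually_deriv_ne h₂ hT hσ hσ₀ hf hx₁ (sub_ne_zero.1 hne₁) hsign hobs)

end IsClassicalSolution

end ClassicalSolutions

theorem drift_uniqueness_pointwise_general {T : ℝ} (hT : 0 < T) {σ b₁ b₂ f : ℝ → ℝ}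
    (hσ : Continuous σ) (hσ₀ : ∀ x, σ x ≠ 0) (hf : ∀ x, deriv f x ≠ 0) {u₁ u₂ : ℝ → ℝ → ℝ}
    (h₁ : IsClassicalSolution T b₁ σ f u₁) (h₂ : IsClassicalSolution T b₂ σ f u₂) {x₀ : ℝ}
    (hright : ∀ x ∈ Ici x₀, (∃ᶠ y in 𝓝[>] x, b₁ y = b₂ y) → b₁ =ᶠ[𝓝[>] x] b₂)
    (hleft : ∀ x ∈ Iic x₀, (∃ᶠ y in 𝓝[<] x, b₁ y = b₂ y) → b₁ =ᶠ[𝓝[<] x] b₂)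
    (hobs : ∀ᶠ t in 𝓝[>] 0, u₁ t x₀ = u₂ t x₀)
    (hobsd : ∃ᶠ t in 𝓝[>] 0, deriv (u₁ t) x₀ = deriv (u₂ t) x₀) : b₁ = b₂ := by
  have hIci : EqOn b₁ b₂ (Ici x₀) := h₁.drift_eqOn_Ici h₂ hT hσ hσ₀ hf hright hobs hobsd
  have hIci_neg : EqOn (fun x => -b₁ (-x)) (fun x => -b₂ (-x)) (Ici (-x₀)) := by
    refine h₁.neg_space.drift_eqOn_Ici h₂.neg_space hT (hσ.comp continuous_neg)
      (fun x => hσ₀ (-x)) (fun x => ?_) (fun x hx hfreq => ?_) (by simpa using hobs) ?_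
    · simpa [deriv_comp_neg] using hf (-x)
    · have hfreq_neg : ∃ᶠ y in 𝓝[<] (-x), b₁ y = b₂ y :=
        tendsto_neg_nhdsGT.frequently (hfreq.mono fun y hy => neg_inj.1 hy)
      have heq : b₁ =ᶠ[𝓝[<] (-x)] b₂ := hleft (-x) (neg_le.1 (mem_Ici.1 hx)) hfreq_neg
      filter_upwards [tendsto_neg_nhdsGT.eventually heq] with y hy using congrArg Neg.neg hy
    · simpa [deriv_comp_neg] using hobsd
  funext x
  rcases le_total x₀ x with hx | hx
  · exact hIci hx
  · simpa using hIci_neg (neg_le_neg hx)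

/-- Pointwise-observation variant of Theorem 1: the drift is uniquely determined by the
values and first spatial derivatives of the solution at a single point, for small times. -/
theorem drift_uniqueness_pointwise
    (T : ℝ) (hT : 0 < T)
    (sigma b bt : ℝ → ℝ)
    (hsLip : ∃ K, LipschitzWith K sigma) (hspos : ∀ x, 0 < sigma x)
    (hb : ClassM b) (hbt : ClassM bt)
    (f : ℝ → ℝ) (hf : ContDiff ℝ 2 f) (hfd : ∀ x, deriv f x ≠ 0)
    (u ut : ℝ → ℝ → ℝ)
    (hu : IsClassicalSolution T b sigma f u)
    (hut : IsClassicalSolution T bt sigma f ut)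
    (ε : ℝ) (hε : ε ∈ Ioo 0 T) (x₀ : ℝ)
    (hobs : ∀ t ∈ Ioo 0 ε, u t x₀ = ut t x₀)
    (hobsd : ∀ t ∈ Ioo 0 ε,
      deriv (fun y => u t y) x₀ = deriv (fun y => ut t y) x₀) :
    ∀ x : ℝ, b x = bt x := by
  obtain ⟨_, hσ⟩ := hsLip
  have hsmall : ∀ᶠ t in 𝓝[>] 0, t ∈ Ioo 0 ε := Ioo_mem_nhdsGT hε.1
  exact congrFun (drift_uniqueness_pointwise_general hT hσ.continuous (fun x => (hspos x).ne') hfd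
    hu hut (fun x _ => hb.2.eventuallyEq_nhdsGT_of_frequently hbt.2 x)
    (fun x _ => hb.2.eventuallyEq_nhdsLT_of_frequently hbt.2 x)
    (hsmall.mono hobs) (hsmall.mono hobsd).frequently)
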